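/- Analytic closure of the strict geometric condition (G) for 1/2 < a ≤ 1: if 1/2 < a ≤ 1 and s₀ > 0 satisfies the free boundary condition tanh(φ(s₀)) = B(s₀)·K/(a·sinh(2s₀)), then cosh(2·s₀) > 2a; equivalently B(s₀)² > 2·K². -/

import Mathlib

namespace MoriCatenoid

/-- Profile function `B(s) = √(a·cosh(2s) − 1/2)` of the Mori family. -/
noncomputable def B (a s : ℝ) : ℝ := Real.sqrt (a * Real.cosh (2 * s) - 1 / 2)

/-- Profile function `A(s) = √(a·cosh(2s) + 1/2)` of the Mori family. -/
noncomputable def A (a s : ℝ) : ℝ := Real.sqrt (a * Real.cosh (2 * s) + 1 / 2)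

/-- The constant `K = √(a² − 1/4)`. -/
noncomputable def K (a : ℝ) : ℝ := Real.sqrt (a ^ 2 - 1 / 4)

/-- The angle function `φ(s) = K·∫₀ˢ dt/(A(t)²·B(t))`. -/
noncomputable def φ (a s : ℝ) : ℝ := K a * ∫ t in (0:ℝ)..s, 1 / ((A a t) ^ 2 * B a t)

/-- The mode-one Jacobi field `f_*(s) = d/ds (A(s)·cosh(φ(s)))`. -/
noncomputable def fstar (a s : ℝ) : ℝ := deriv (fun t => A a t * Real.cosh (φ a t)) s

/-- Squared norm of the second fundamental form, `|II|²(s) = 2·(B''(s)/B(s) − 1)`. -/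
noncomputable def IIsq (a s : ℝ) : ℝ := 2 * (deriv (deriv (B a)) s / B a s - 1)

/-- The mode-`k` potential `W_k(s) = |II|²(s) − 2 − k²/B(s)²`. -/
noncomputable def W (a : ℝ) (k : ℤ) (s : ℝ) : ℝ := IIsq a s - 2 - (k : ℝ) ^ 2 / (B a s) ^ 2

/-- Inverse hyperbolic cosine: `arcosh x = log (x + √(x² − 1))`. -/
noncomputable def arcosh (x : ℝ) : ℝ := Real.log (x + Real.sqrt (x ^ 2 - 1))

/-- The axial boost field `u_*(s) = −a·sinh(2s)/B(s)`. -/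
noncomputable def ustar (a s : ℝ) : ℝ := -a * Real.sinh (2 * s) / B a s

/-- The radial quadratic form of mode `k`:
`S_k(u) = ∫_{−s₀}^{s₀} (B·u'² − B·W_k·u²) − coth(r)·B(s₀)·(u(s₀)² + u(−s₀)²)`,
where `u'` is the derivative of `u` within `[−s₀, s₀]`. -/
noncomputable def Sk (a s₀ r : ℝ) (k : ℤ) (u : ℝ → ℝ) : ℝ :=
  (∫ s in (-s₀)..s₀,
      (B a s * (derivWithin u (Set.Icc (-s₀) s₀) s) ^ 2 - B a s * W a k s * u s ^ 2))
    - Real.cosh r / Real.sinh r * B a s₀ * (u s₀ ^ 2 + u (-s₀) ^ 2)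

/-!
Suppose `cosh (2s) ≤ 2a` and let `θ = arsinh (√(2a / (a - 1/2)) * sinh s)`, so that
`B = √(a - 1/2) * cosh θ` and `θ' = √(2a) * cosh s / B`. Bounding `A² ≥ a + 1/2` and `1 ≤ cosh t`
in the integrand of `φ` gives `tanh φ ≤ φ ≤ K * θ / ((a + 1/2) * √(2a))`. On the other hand
`B * K / (a * sinh (2s)) = K * cosh θ / (√(2a) * sinh θ * cosh s)`, so the free boundary condition
would force `(a + 1/2) * cosh θ ≤ θ * sinh θ * cosh s`. Since `cosh² s ≤ a + 1/2` and
`cosh² θ ≤ 2a + 1`, this contradicts the inequality `√2 * θ * sinh θ < cosh² θ`, valid for all `θ`.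
-/

section

open Real

theorem one_add_sq_div_two_le_cosh (x : ℝ) : 1 + x ^ 2 / 2 ≤ cosh x := by
  have half_sq_le : (x / 2) ^ 2 ≤ sinh (x / 2) ^ 2 := by
    rw [sq_le_sq, abs_sinh, self_le_sinh_iff]
    exact abs_nonneg _
  have cosh_eq := cosh_two_mul (x / 2)
  rw [mul_div_cancel₀ x two_ne_zero, cosh_sq] at cosh_eq
  linarith

theorem sqrt_two_mul_mul_sinh_lt_cosh_sq (x : ℝ) : √2 * (x * sinh x) < cosh x ^ 2 := by
  have amgm : √2 * (x * sinh x) ≤ x ^ 2 + sinh x ^ 2 / 2 := by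
    have two_mul_le := two_mul_le_add_sq (√2 * x) (sinh x)
    rw [mul_pow, sq_sqrt zero_le_two] at two_mul_le
    linarith
  calc √2 * (x * sinh x) ≤ x ^ 2 + sinh x ^ 2 / 2 := amgm
    _ ≤ 2 * (cosh x - 1) + (cosh x ^ 2 - 1) / 2 := by
      linarith [one_add_sq_div_two_le_cosh x, sinh_sq x]
    _ < cosh x ^ 2 := by linarith [sq_nonneg (cosh x - 2)]

theorem tanh_le_self {x : ℝ} (hx : 0 ≤ x) : tanh x ≤ x := by
  have sinh_le : sinh x - sinh 0 ≤ cosh x * (x - 0) := by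
    refine (convex_Icc 0 x).image_sub_le_mul_sub_of_deriv_le continuous_sinh.continuousOn
      differentiable_sinh.differentiableOn (fun t ht ↦ ?_) 0 ⟨le_rfl, hx⟩ x ⟨hx, le_rfl⟩ hx
    rw [interior_Icc] at ht
    rw [Real.deriv_sinh, cosh_le_cosh, abs_of_pos ht.1, abs_of_nonneg hx]
    exact ht.2.le
  rw [sinh_zero, sub_zero, sub_zero] at sinh_le
  rwa [tanh_eq_sinh_div_cosh, div_le_iff₀ (cosh_pos x), mul_comm]

variable {a s : ℝ}

theorem le_mul_cosh (ha : 0 ≤ a) (s : ℝ) : a ≤ a * cosh s :=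
  le_mul_of_one_le_right ha (one_le_cosh s)

theorem K_sq (ha : 1 / 2 ≤ a) : K a ^ 2 = a ^ 2 - 1 / 4 :=
  sq_sqrt (by nlinarith)

theorem K_pos (ha : 1 / 2 < a) : 0 < K a :=
  sqrt_pos.mpr (by nlinarith)

theorem add_half_le_A_sq (ha : 0 ≤ a) (s : ℝ) : a + 1 / 2 ≤ A a s ^ 2 := by
  have := le_mul_cosh ha (2 * s)
  rw [A, sq_sqrt (by linarith)]
  linarith

theorem B_sq (ha : 1 / 2 ≤ a) (s : ℝ) : B a s ^ 2 = a * cosh (2 * s) - 1 / 2 :=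
  sq_sqrt (by linarith [le_mul_cosh (by linarith : 0 ≤ a) (2 * s)])

theorem B_pos (ha : 1 / 2 < a) (s : ℝ) : 0 < B a s :=
  sqrt_pos.mpr (by linarith [le_mul_cosh (by linarith : 0 ≤ a) (2 * s)])

theorem continuous_A (a : ℝ) : Continuous (A a) := by
  unfold A
  fun_prop

theorem continuous_B (a : ℝ) : Continuous (B a) := by
  unfold B
  fun_prop

theorem B_sq_sub_two_mul_K_sq (ha : 1 / 2 ≤ a) (s : ℝ) :
    B a s ^ 2 - 2 * K a ^ 2 = a * (cosh (2 * s) - 2 * a) := by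
  rw [B_sq ha, K_sq ha]
  ring

theorem φ_nonneg (a : ℝ) (hs : 0 ≤ s) : 0 ≤ φ a s :=
  mul_nonneg (sqrt_nonneg _) <| intervalIntegral.integral_nonneg hs fun _ _ ↦
    one_div_nonneg.mpr <| mul_nonneg (sq_nonneg _) (sqrt_nonneg _)

/-- The parameter `θ` in which the profile of the Mori family reads `B = √(a - 1/2) * cosh θ`; it
serves to integrate `cosh s / B` in closed form. -/
noncomputable def profileAngle (a s : ℝ) : ℝ := arsinh (√(2 * a / (a - 1 / 2)) * sinh s)

theorem profileAngle_zero (a : ℝ) : profileAngle a 0 = 0 := by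
  rw [profileAngle, sinh_zero, mul_zero, arsinh_zero]

theorem sqrt_mul_sinh_profileAngle (ha : 1 / 2 < a) (s : ℝ) :
    √(a - 1 / 2) * sinh (profileAngle a s) = √(2 * a) * sinh s := by
  rw [profileAngle, sinh_arsinh, sqrt_div (by linarith), ← mul_assoc,
    mul_div_cancel₀ _ (sqrt_pos.mpr (sub_pos.mpr ha)).ne']

theorem B_eq_sqrt_mul_cosh_profileAngle (ha : 1 / 2 < a) (s : ℝ) :
    B a s = √(a - 1 / 2) * cosh (profileAngle a s) := by
  rw [← sq_eq_sq₀ (B_pos ha s).le (mul_nonneg (sqrt_nonneg _) (cosh_pos _).le)]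
  calc B a s ^ 2 = (√(2 * a) * sinh s) ^ 2 + (a - 1 / 2) := by
        rw [B_sq ha.le, mul_pow, sq_sqrt (by linarith), cosh_two_mul, cosh_sq]
        ring
    _ = (√(a - 1 / 2) * cosh (profileAngle a s)) ^ 2 := by
        rw [← sqrt_mul_sinh_profileAngle ha, mul_pow, mul_pow, sq_sqrt (by linarith), cosh_sq]
        ring

theorem hasDerivAt_profileAngle (ha : 1 / 2 < a) (s : ℝ) :
    HasDerivAt (profileAngle a) (√(2 * a) * cosh s / B a s) s := by
  convert! ((hasDerivAt_sinh s).const_mul √(2 * a / (a - 1 / 2))).arsinh using 1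
  rw [B_eq_sqrt_mul_cosh_profileAngle ha, profileAngle, cosh_arsinh, sqrt_div (by linarith),
    smul_eq_mul]
  ring

theorem one_div_A_sq_mul_B_le (ha : 1 / 2 < a) (s : ℝ) :
    1 / (A a s ^ 2 * B a s) ≤ √(2 * a) * cosh s / B a s / ((a + 1 / 2) * √(2 * a)) := by
  have : 0 < B a s := B_pos ha s
  have : 0 < √(2 * a) := sqrt_pos.mpr (by linarith)
  have : 0 < a + 1 / 2 := by linarith
  calc 1 / (A a s ^ 2 * B a s) ≤ cosh s / ((a + 1 / 2) * B a s) := by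
        gcongr
        · exact one_le_cosh s
        · exact add_half_le_A_sq (by linarith) s
    _ = √(2 * a) * cosh s / B a s / ((a + 1 / 2) * √(2 * a)) := by field_simp

theorem continuous_one_div_A_sq_mul_B (ha : 1 / 2 < a) :
    Continuous fun s ↦ 1 / (A a s ^ 2 * B a s) := by
  refine continuous_const.div (((continuous_A a).pow 2).mul (continuous_B a)) fun s ↦ ?_
  have hA : 0 < A a s ^ 2 := by linarith [add_half_le_A_sq (by linarith : 0 ≤ a) s]
  exact (mul_pos hA (B_pos ha s)).ne'

theorem φ_le_K_mul_profileAngle_div (ha : 1 / 2 < a) (hs : 0 ≤ s) :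
    φ a s ≤ K a * (profileAngle a s / ((a + 1 / 2) * √(2 * a))) := by
  have hderiv (t : ℝ) := (hasDerivAt_profileAngle ha t).div_const ((a + 1 / 2) * √(2 * a))
  have integral_le := intervalIntegral.integral_le_sub_of_hasDeriv_right_of_le hs
    (fun t _ ↦ (hderiv t).continuousAt.continuousWithinAt) (fun t _ ↦ (hderiv t).hasDerivWithinAt)
    (continuous_one_div_A_sq_mul_B ha).integrableOn_Icc (fun t _ ↦ one_div_A_sq_mul_B_le ha t)
  rw [profileAngle_zero, zero_div, sub_zero] at integral_le
  exact mul_le_mul_of_nonneg_left integral_le (sqrt_nonneg _)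

theorem cosh_le_sqrt_add_half (hc : cosh (2 * s) ≤ 2 * a) : cosh s ≤ √(a + 1 / 2) := by
  rw [cosh_two_mul, sinh_sq] at hc
  exact le_sqrt_of_sq_le (by linarith)

theorem cosh_profileAngle_le (ha : 1 / 2 < a) (hc : cosh (2 * s) ≤ 2 * a) :
    cosh (profileAngle a s) ≤ √2 * √(a + 1 / 2) := by
  have hm : 0 < a - 1 / 2 := sub_pos.mpr ha
  rw [← sqrt_mul zero_le_two]
  refine le_sqrt_of_sq_le (le_of_mul_le_mul_left ?_ hm)
  calc (a - 1 / 2) * cosh (profileAngle a s) ^ 2 = a * cosh (2 * s) - 1 / 2 := by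
        rw [← B_sq ha.le, B_eq_sqrt_mul_cosh_profileAngle ha, mul_pow, sq_sqrt hm.le]
    _ ≤ a * (2 * a) - 1 / 2 := by gcongr
    _ = (a - 1 / 2) * (2 * (a + 1 / 2)) := by ring

theorem profileAngle_mul_sinh_mul_cosh_lt (ha : 1 / 2 < a) (hc : cosh (2 * s) ≤ 2 * a) :
    profileAngle a s * sinh (profileAngle a s) * cosh s
      < (a + 1 / 2) * cosh (profileAngle a s) := by
  set θ := profileAngle a s
  have lt_sqrt_mul_cosh : θ * sinh θ < √(a + 1 / 2) * cosh θ := by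
    refine lt_of_mul_lt_mul_left ?_ (sqrt_nonneg 2)
    calc √2 * (θ * sinh θ) < cosh θ * cosh θ := by
          rw [← sq]
          exact sqrt_two_mul_mul_sinh_lt_cosh_sq θ
      _ ≤ √2 * √(a + 1 / 2) * cosh θ :=
          mul_le_mul_of_nonneg_right (cosh_profileAngle_le ha hc) (cosh_pos θ).le
      _ = √2 * (√(a + 1 / 2) * cosh θ) := mul_assoc _ _ _
  calc θ * sinh θ * cosh s < √(a + 1 / 2) * cosh θ * cosh s :=
        mul_lt_mul_of_pos_right lt_sqrt_mul_cosh (cosh_pos s)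
    _ ≤ √(a + 1 / 2) * cosh θ * √(a + 1 / 2) :=
        mul_le_mul_of_nonneg_left (cosh_le_sqrt_add_half hc)
          (mul_nonneg (sqrt_nonneg _) (cosh_pos θ).le)
    _ = (a + 1 / 2) * cosh θ := by
        rw [mul_right_comm, mul_self_sqrt (by linarith)]

theorem profileAngle_div_lt_B_div (ha : 1 / 2 < a) (hs : 0 < s) (hc : cosh (2 * s) ≤ 2 * a) :
    profileAngle a s / ((a + 1 / 2) * √(2 * a)) < B a s / (a * sinh (2 * s)) := by
  have hq : 0 < √(2 * a) := sqrt_pos.mpr (by linarith)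
  have hr : 0 < √(a - 1 / 2) := sqrt_pos.mpr (by linarith)
  have mul_sinh_two_mul : a * sinh (2 * s)
      = √(2 * a) * √(a - 1 / 2) * (sinh (profileAngle a s) * cosh s) := by
    calc a * sinh (2 * s) = 2 * a * sinh s * cosh s := by rw [sinh_two_mul]; ring
      _ = √(2 * a) * (√(2 * a) * sinh s) * cosh s := by
          rw [← mul_assoc, mul_self_sqrt (by linarith)]
      _ = √(2 * a) * √(a - 1 / 2) * (sinh (profileAngle a s) * cosh s) := by
          rw [← sqrt_mul_sinh_profileAngle ha]; ring
  have hden : 0 < a * sinh (2 * s) :=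
    mul_pos (by linarith) (sinh_pos_iff.mpr (by linarith))
  rw [div_lt_div_iff₀ (mul_pos (by linarith) hq) hden, mul_sinh_two_mul,
    B_eq_sqrt_mul_cosh_profileAngle ha]
  linarith [mul_lt_mul_of_pos_left (profileAngle_mul_sinh_mul_cosh_lt ha hc) (mul_pos hq hr)]

theorem tanh_φ_lt_of_cosh_two_mul_le (ha : 1 / 2 < a) (hs : 0 < s) (hc : cosh (2 * s) ≤ 2 * a) :
    tanh (φ a s) < B a s * K a / (a * sinh (2 * s)) :=
  calc tanh (φ a s) ≤ φ a s := tanh_le_self (φ_nonneg a hs.le)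
    _ ≤ K a * (profileAngle a s / ((a + 1 / 2) * √(2 * a))) := φ_le_K_mul_profileAngle_div ha hs.le
    _ < K a * (B a s / (a * sinh (2 * s))) :=
        mul_lt_mul_of_pos_left (profileAngle_div_lt_B_div ha hs hc) (K_pos ha)
    _ = B a s * K a / (a * sinh (2 * s)) := by ring

end

theorem G_closure_a_le_one_general (a : ℝ) (ha : 1 / 2 < a) (s₀ : ℝ) (hs₀ : 0 < s₀)
    (hFBC : Real.tanh (φ a s₀) = B a s₀ * K a / (a * Real.sinh (2 * s₀))) :
    2 * a < Real.cosh (2 * s₀) ∧ 2 * K a ^ 2 < B a s₀ ^ 2 := by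
  have two_mul_lt_cosh : 2 * a < Real.cosh (2 * s₀) := by
    by_contra! hc
    exact (tanh_φ_lt_of_cosh_two_mul_le ha hs₀ hc).ne hFBC
  refine ⟨two_mul_lt_cosh, sub_pos.mp ?_⟩
  rw [B_sq_sub_two_mul_K_sq ha.le]
  exact mul_pos (by linarith) (sub_pos.mpr two_mul_lt_cosh)

/-- Analytic closure of the strict geometric condition (G) for `1/2 < a ≤ 1`:
under the free boundary condition, `cosh(2s₀) > 2a`; equivalently `B(s₀)² > 2·K²`. -/
theorem G_closure_a_le_one (a : ℝ) (ha : 1 / 2 < a) (ha1 : a ≤ 1)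
    (s₀ : ℝ) (hs₀ : 0 < s₀)
    (hFBC : Real.tanh (φ a s₀) = B a s₀ * K a / (a * Real.sinh (2 * s₀))) :
    2 * a < Real.cosh (2 * s₀) ∧ 2 * K a ^ 2 < B a s₀ ^ 2 :=
  G_closure_a_le_one_general a ha s₀ hs₀ hFBC

end MoriCatenoid
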